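/- (Monotonicity Lemma) Let a < b be real numbers and let f : [a, b] → ℝ be a semialgebraic function. Then there is a partition a =: t₁ < t₂ < ⋯ < t_N := b of [a, b] such that, for each l ∈ {1, …, N − 1}, the restriction of f to the open interval (t_l, t_{l+1}) is C¹ and is either constant or strictly monotone. -/

import Mathlib

open MvPolynomial Set Filter
open scoped Classical

noncomputable section

/-- The exponent vector of a monomial, viewed as a point of `ℝⁿ`. -/
def expVec {n : ℕ} (κ : Fin n →₀ ℕ) : Fin n → ℝ := fun j => (κ j : ℝ)

/-- The Newton polyhedron at infinity `Γ(f)`: the convex hull of the support of `f`. -/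
def NewtonPolyhedron {n : ℕ} (f : MvPolynomial (Fin n) ℝ) : Set (Fin n → ℝ) :=
  convexHull ℝ (expVec '' (f.support : Set (Fin n →₀ ℕ)))

/-- `d(q, Γ(f)) := min {⟨q, κ⟩ : κ ∈ Γ(f)}`. -/
def NewtonD {n : ℕ} (f : MvPolynomial (Fin n) ℝ) (q : Fin n → ℝ) : ℝ :=
  sInf ((fun κ : Fin n → ℝ => ∑ j, q j * κ j) '' NewtonPolyhedron f)

/-- `Δ(q, Γ(f)) := {κ ∈ Γ(f) : ⟨q, κ⟩ = d(q, Γ(f))}`. -/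
def NewtonFace {n : ℕ} (f : MvPolynomial (Fin n) ℝ) (q : Fin n → ℝ) : Set (Fin n → ℝ) :=
  {κ ∈ NewtonPolyhedron f | ∑ j, q j * κ j = NewtonD f q}

/-- For a set `Δ ⊆ ℝⁿ`, the polynomial `f_Δ := ∑_{κ ∈ Δ} a_κ x^κ`. -/
def facePoly {n : ℕ} (f : MvPolynomial (Fin n) ℝ) (Δ : Set (Fin n → ℝ)) :
    MvPolynomial (Fin n) ℝ :=
  ∑ κ ∈ f.support.filter (fun κ => expVec κ ∈ Δ), monomial κ (f.coeff κ)

/-- `ℝ^J := {x ∈ ℝⁿ : x_j = 0 for all j ∉ J}`. -/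
def RJ {n : ℕ} (J : Set (Fin n)) : Set (Fin n → ℝ) := {x | ∀ j ∉ J, x j = 0}

/-- The restriction of `f` to `ℝ^J` is not constant. -/
def NotConstOn {n : ℕ} (f : MvPolynomial (Fin n) ℝ) (J : Set (Fin n)) : Prop :=
  ∃ x ∈ RJ J, ∃ y ∈ RJ J, eval x f ≠ eval y f

/-- The Mangasarian–Fromovitz property at infinity for `inf {f 0 x : f i x ≤ 0, i = 1,…,p}`. -/
def MFinfty {n p : ℕ} (f : Fin (p + 1) → MvPolynomial (Fin n) ℝ) : Prop :=
  ∀ J : Set (Fin n), J.Nonempty → ∀ q x : Fin n → ℝ,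
    NewtonD (f 0) q < 0 →
    (∀ i, NotConstOn (f i) J → NewtonFace (f i) q ⊆ RJ J) →
    (∀ j, x j = 0 ↔ j ∉ J) →
    (∀ i, i ≠ 0 → eval x (facePoly (f i) (NewtonFace (f i) q)) ≤ 0) →
    ∃ v : Fin n → ℝ, v ≠ 0 ∧ ∀ i, NotConstOn (f i) J →
      eval x (facePoly (f i) (NewtonFace (f i) q)) = 0 →
      ∑ j, eval x (pderiv j (facePoly (f i) (NewtonFace (f i) q))) * v j < 0

/-- Kouchnirenko non-degeneracy at infinity. -/
def NondegenerateAtInfinity {n : ℕ} (f : MvPolynomial (Fin n) ℝ) : Prop :=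
  ∀ q : Fin n → ℝ, NewtonD f q < 0 →
    ∀ x : Fin n → ℝ, (∀ j, x j ≠ 0) →
      ¬ ∀ j, eval x (pderiv j (facePoly f (NewtonFace f q))) = 0

/-- A convenient polynomial. -/
def Convenient {n : ℕ} (f : MvPolynomial (Fin n) ℝ) : Prop :=
  ∀ j : Fin n, ∃ c : ℝ, 0 < c ∧ c • (Pi.single j 1 : Fin n → ℝ) ∈ NewtonPolyhedron f

/-- A bad face of `Γ(f)`. -/
def BadFace {n : ℕ} (f : MvPolynomial (Fin n) ℝ) (Δ : Set (Fin n → ℝ)) : Prop :=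
  (∃ q : Fin n → ℝ, Δ = NewtonFace f q) ∧
  (0 : Fin n → ℝ) ∈ affineSpan ℝ Δ ∧
  ∃ q : Fin n → ℝ, (∃ i j, q i * q j < 0) ∧
    {κ : Fin n → ℝ | ∑ j, q j * κ j = 0} ∩ NewtonPolyhedron f = Δ

/-- The set of critical values of `f`. -/
def K0 {n : ℕ} (f : MvPolynomial (Fin n) ℝ) : Set ℝ :=
  {c | ∃ x : Fin n → ℝ, (∀ j, eval x (pderiv j f) = 0) ∧ eval x f = c}

/-- `Σ∞(f)`: critical values of `f_Δ` over all bad faces `Δ`. -/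
def SigmaInfty {n : ℕ} (f : MvPolynomial (Fin n) ℝ) : Set ℝ :=
  {c | ∃ Δ : Set (Fin n → ℝ), BadFace f Δ ∧ ∃ x : Fin n → ℝ,
    (∀ j, eval x (pderiv j (facePoly f Δ)) = 0) ∧ eval x (facePoly f Δ) = c}

/-- `Σ∞'(f)`: critical values of `f_Δ` on `(ℝ ∖ {0})ⁿ` over all bad faces `Δ`. -/
def SigmaInfty' {n : ℕ} (f : MvPolynomial (Fin n) ℝ) : Set ℝ :=
  {c | ∃ Δ : Set (Fin n → ℝ), BadFace f Δ ∧ ∃ x : Fin n → ℝ, (∀ j, x j ≠ 0) ∧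
    (∀ j, eval x (pderiv j (facePoly f Δ)) = 0) ∧ eval x (facePoly f Δ) = c}

/-- The Euclidean norm on `Fin k → ℝ`. -/
def euclNorm {k : ℕ} (x : Fin k → ℝ) : ℝ := Real.sqrt (∑ j, (x j) ^ 2)

/-- Basic semialgebraic subsets of `ℝ^m`. -/
def BasicSA {m : ℕ} (A : Set (Fin m → ℝ)) : Prop :=
  ∃ (k l : ℕ) (g : Fin k → MvPolynomial (Fin m) ℝ) (h : Fin l → MvPolynomial (Fin m) ℝ),
    A = {x | (∀ i, eval x (g i) = 0) ∧ ∀ i, 0 < eval x (h i)}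

/-- Semialgebraic subsets of `ℝ^m`: finite unions of basic semialgebraic sets. -/
def IsSA {m : ℕ} (A : Set (Fin m → ℝ)) : Prop :=
  ∃ (N : ℕ) (B : Fin N → Set (Fin m → ℝ)), (∀ i, BasicSA (B i)) ∧ A = ⋃ i, B i

/-- A semialgebraic scalar function on a domain `D ⊆ ℝ` (graph is semialgebraic). -/
def IsSAFunOn (D : Set ℝ) (f : ℝ → ℝ) : Prop :=
  IsSA {z : Fin 2 → ℝ | z 0 ∈ D ∧ z 1 = f (z 0)}

/-- A semialgebraic curve `D → ℝⁿ` (graph is semialgebraic). -/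
def IsSACurve {n : ℕ} (D : Set ℝ) (φ : ℝ → Fin n → ℝ) : Prop :=
  IsSA {z : Fin (n + 1) → ℝ | z 0 ∈ D ∧ ∀ j : Fin n, z j.succ = φ (z 0) j}

/-- A semialgebraic map `ℝⁿ → ℝ^p` (graph is semialgebraic). -/
def IsSAMap {n p : ℕ} (F : (Fin n → ℝ) → (Fin p → ℝ)) : Prop :=
  IsSA {z : Fin (n + p) → ℝ |
    (fun i : Fin p => z (Fin.natAdd n i)) = F (fun j : Fin n => z (Fin.castAdd p j))}

namespace MonoLemma

open scoped Topology

abbrev RXY := Polynomial (Polynomial ℝ)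

lemma eventually_eval_ne (D : Polynomial ℝ) (hD : D ≠ 0) :
    ∀ᶠ x in cofinite, D.eval x ≠ 0 := by
  rw [Filter.eventually_cofinite]
  refine (D.roots.toFinset.finite_toSet).subset ?_
  intro x hx
  simp only [mem_ofPred_eq, not_not] at hx
  simp [hD, hx]

lemma evalEval_dvd {p q : RXY} (h : p ∣ q) {x y : ℝ} (hp : p.evalEval x y = 0) :
    q.evalEval x y = 0 := by
  obtain ⟨r, rfl⟩ := h
  rw [Polynomial.evalEval_mul, hp, zero_mul]

/-- Bezout identity after clearing denominators. -/
lemma bezout (p q : RXY) (hp : Irreducible p) (hd : p.natDegree ≠ 0) (hq : ¬ p ∣ q) :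
    ∃ (D : Polynomial ℝ) (A B : RXY), D ≠ 0 ∧ A * p + B * q = Polynomial.C D := by
  have hprim : p.IsPrimitive := hp.isPrimitive hd
  let K := FractionRing (Polynomial ℝ)
  let ψ := algebraMap (Polynomial ℝ) K
  have hinj : Function.Injective ψ := IsFractionRing.injective _ _
  have hirr : Irreducible (p.map ψ) :=
    (hprim.irreducible_iff_irreducible_map_fraction_map (K := K)).1 hp
  have hnd : ¬ p.map ψ ∣ q.map ψ := fun h =>
    hq (hprim.dvd_of_fraction_map_dvd_fraction_map (K := K) h)
  obtain ⟨u, v, huv⟩ := (hirr.coprime_iff_not_dvd).2 hnd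
  obtain ⟨b, hb, hb'⟩ :=
    IsLocalization.integerNormalization_spec (nonZeroDivisors (Polynomial ℝ)) u
  obtain ⟨c, hc, hc'⟩ :=
    IsLocalization.integerNormalization_spec (nonZeroDivisors (Polynomial ℝ)) v
  set U := IsLocalization.integerNormalization (nonZeroDivisors (Polynomial ℝ)) u
  set V := IsLocalization.integerNormalization (nonZeroDivisors (Polynomial ℝ)) v
  have hU : U.map ψ = Polynomial.C (ψ b) * u := by
    rw [hb', Algebra.smul_def]; rfl
  have hV : V.map ψ = Polynomial.C (ψ c) * v := by
    rw [hc', Algebra.smul_def]; rfl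
  refine ⟨b * c, Polynomial.C c * U, Polynomial.C b * V,
    mul_ne_zero (nonZeroDivisors.ne_zero hb) (nonZeroDivisors.ne_zero hc), ?_⟩
  apply Polynomial.map_injective ψ hinj
  simp only [Polynomial.map_add, Polynomial.map_mul, Polynomial.map_C, hU, hV, map_mul]
  linear_combination (Polynomial.C (ψ b) * Polynomial.C (ψ c)) * huv

lemma const_case (p : RXY) (hp : Irreducible p) (hd : p.natDegree = 0) :
    ∀ᶠ x in cofinite, ∀ y, p.evalEval x y ≠ 0 := by
  obtain ⟨c, rfl⟩ := Polynomial.natDegree_eq_zero.1 hd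
  have hc : c ≠ 0 := by
    rintro rfl
    exact hp.ne_zero (by simp)
  filter_upwards [eventually_eval_ne c hc] with x hx y
  rwa [Polynomial.evalEval_C]

lemma dichotomy (p : RXY) (hp : Irreducible p) (q : RXY) :
    ∀ᶠ x in cofinite, ∀ y, p.evalEval x y = 0 → p ∣ q ∨ q.evalEval x y ≠ 0 := by
  by_cases hd : p.natDegree = 0
  · filter_upwards [const_case p hp hd] with x hx y hy
    exact absurd hy (hx y)
  by_cases hq : p ∣ q
  · exact Eventually.of_forall fun x y _ => Or.inl hq
  obtain ⟨D, A, B, hD, h⟩ := bezout p q hp hd hq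
  filter_upwards [eventually_eval_ne D hD] with x hx y hy
  refine Or.inr fun hqz => hx ?_
  have := congrArg (Polynomial.evalEval x y) h
  rw [Polynomial.evalEval_add, Polynomial.evalEval_mul, Polynomial.evalEval_mul, hy, hqz,
    Polynomial.evalEval_C] at this
  simpa using this.symm

lemma simple_root (p : RXY) (hp : Irreducible p) :
    ∀ᶠ x in cofinite, ∀ y, p.evalEval x y = 0 →
      (Polynomial.derivative p).evalEval x y ≠ 0 := by
  by_cases hd : p.natDegree = 0
  · filter_upwards [const_case p hp hd] with x hx y hy
    exact absurd hy (hx y)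
  filter_upwards [dichotomy p hp (Polynomial.derivative p)] with x hx y hy
  refine (hx y hy).resolve_left fun hdvd => ?_
  have h0 : Polynomial.derivative p = 0 :=
    Polynomial.eq_zero_of_dvd_of_natDegree_lt hdvd (Polynomial.natDegree_derivative_lt hd)
  exact hd (Polynomial.derivative_eq_zero.1 h0)

lemma evalEval_monomial (n : ℕ) (c : Polynomial ℝ) (x y : ℝ) :
    (Polynomial.monomial n c : RXY).evalEval x y = c.eval x * y ^ n := by
  simp [Polynomial.evalEval, Polynomial.eval_monomial]

lemma contDiff_evalEval (p : RXY) :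
    ContDiff ℝ 1 (fun z : ℝ × ℝ => p.evalEval z.1 z.2) := by
  induction p using Polynomial.induction_on' with
  | add p q hp hq =>
    simp only [Polynomial.evalEval_add]
    exact hp.add hq
  | monomial n c =>
    simp only [evalEval_monomial]
    exact ((by simpa using c.contDiff_aeval (𝕜 := ℝ) 1 : ContDiff ℝ 1 fun x : ℝ => c.eval x).comp contDiff_fst).mul (contDiff_snd.pow n)

lemma exists_dX (p : RXY) : ∃ px : RXY, ∀ x y : ℝ,
    HasFDerivAt (fun z : ℝ × ℝ => p.evalEval z.1 z.2)
      (px.evalEval x y • ContinuousLinearMap.fst ℝ ℝ ℝ +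
        (Polynomial.derivative p).evalEval x y • ContinuousLinearMap.snd ℝ ℝ ℝ) (x, y) := by
  induction p using Polynomial.induction_on' with
  | add p q hp hq =>
    obtain ⟨px, hp⟩ := hp
    obtain ⟨qx, hq⟩ := hq
    refine ⟨px + qx, fun x y => ?_⟩
    simp only [Polynomial.evalEval_add, Polynomial.derivative_add]
    refine ((hp x y).add (hq x y)).congr_fderiv ?_
    ext <;> simp
  | monomial n c =>
    refine ⟨Polynomial.monomial n (Polynomial.derivative c), fun x y => ?_⟩
    simp only [Polynomial.derivative_monomial, evalEval_monomial]
    have h1 : HasFDerivAt (fun z : ℝ × ℝ => c.eval z.1)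
        ((Polynomial.derivative c).eval x • ContinuousLinearMap.fst ℝ ℝ ℝ) (x, y) :=
      HasDerivAt.comp_hasFDerivAt (h₂ := fun t => c.eval t) (f := Prod.fst) (x, y)
        (c.hasDerivAt x) hasFDerivAt_fst
    have h2 : HasFDerivAt (fun z : ℝ × ℝ => z.2 ^ n)
        ((n * y ^ (n - 1) : ℝ) • ContinuousLinearMap.snd ℝ ℝ ℝ) (x, y) :=
      HasDerivAt.comp_hasFDerivAt (h₂ := fun t => t ^ n) (f := Prod.snd) (x, y)
        (hasDerivAt_pow n y) hasFDerivAt_snd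
    refine (h1.mul h2).congr_fderiv ?_
    ext <;> simp <;> ring

/-- The implicit function theorem for a bivariate polynomial. -/
lemma implicit (p : RXY) (x₀ y₀ : ℝ) (h0 : p.evalEval x₀ y₀ = 0)
    (h1 : (Polynomial.derivative p).evalEval x₀ y₀ ≠ 0) :
    ∃ φ : ℝ → ℝ, φ x₀ = y₀ ∧ ContDiffAt ℝ 1 φ x₀ ∧
      ∀ᶠ x in 𝓝 x₀, p.evalEval x (φ x) = 0 := by
  obtain ⟨px, hpx⟩ := exists_dX p
  have cd : ContDiffAt ℝ 1 (fun z : ℝ × ℝ => p.evalEval z.1 z.2) (x₀, y₀) :=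
    (contDiff_evalEval p).contDiffAt
  have inv : (fderiv ℝ (fun z : ℝ × ℝ => p.evalEval z.1 z.2) (x₀, y₀) ∘L
      .inr ℝ ℝ ℝ).IsInvertible := by
    rw [(hpx x₀ y₀).fderiv]
    refine ⟨ContinuousLinearEquiv.unitsEquivAut ℝ (Units.mk0 _ h1), ?_⟩
    ext
    simp
  refine ⟨cd.implicitFunction one_ne_zero inv, cd.implicitFunction_apply_self one_ne_zero inv,
    cd.contDiffAt_implicitFunction one_ne_zero inv, ?_⟩
  filter_upwards [cd.eventually_apply_implicitFunction one_ne_zero inv] with x hx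
  exact hx.trans h0

/-- Passing from polynomials in two variables to iterated polynomials. -/
def toXY : MvPolynomial (Fin 2) ℝ →ₐ[ℝ] RXY :=
  MvPolynomial.aeval ![Polynomial.C Polynomial.X, Polynomial.X]

lemma toXY_eval (q : MvPolynomial (Fin 2) ℝ) (z : Fin 2 → ℝ) :
    (toXY q).evalEval (z 0) (z 1) = MvPolynomial.eval z q := by
  induction q using MvPolynomial.induction_on with
  | C c =>
    have : toXY (MvPolynomial.C c) = Polynomial.C (Polynomial.C c) := by
      simp [toXY, MvPolynomial.algHom_C]
    rw [this, Polynomial.evalEval_C]; simp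
  | add p q hp hq => simp [Polynomial.evalEval_add, hp, hq] 
  | mul_X p i hp =>
    rw [map_mul, Polynomial.evalEval_mul, hp, map_mul]
    congr 1
    fin_cases i <;> simp [toXY, Polynomial.evalEval_C, Polynomial.evalEval_X]

lemma exists_factor (q : RXY) (hq : q ≠ 0) (x y : ℝ) (h : q.evalEval x y = 0) :
    ∃ p ∈ (UniqueFactorizationMonoid.factors q).toFinset, p.evalEval x y = 0 := by
  obtain ⟨u, hu⟩ := UniqueFactorizationMonoid.factors_prod hq
  have h2 : Polynomial.evalEvalRingHom x y (UniqueFactorizationMonoid.factors q).prod = 0 := by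
    have h3 : Polynomial.evalEvalRingHom x y
      ((UniqueFactorizationMonoid.factors q).prod * u) = 0 := by rw [hu]; exact h
    rw [map_mul] at h3
    exact (mul_eq_zero.1 h3).resolve_right
      ((u.isUnit.map (Polynomial.evalEvalRingHom x y)).ne_zero)
  rw [map_multiset_prod, Multiset.prod_eq_zero_iff, Multiset.mem_map] at h2
  obtain ⟨p, hp, hp'⟩ := h2
  exact ⟨p, Multiset.mem_toFinset.2 hp, hp'⟩

lemma local_structure (a b : ℝ) (f : ℝ → ℝ) (hsa : IsSAFunOn (Icc a b) f) :
    ∀ᶠ x in cofinite, x ∈ Ioo a b → ContDiffAt ℝ 1 f x ∧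
      (deriv f x ≠ 0 ∨ ∀ᶠ y in 𝓝 x, deriv f y = 0) := by
  obtain ⟨N, B, hB, hG⟩ := hsa
  choose k l g h hB using hB
  choose dX hdX using exists_dX
  let P : Finset RXY := Finset.univ.biUnion fun i => Finset.univ.biUnion fun j =>
    (UniqueFactorizationMonoid.factors (toXY (g i j))).toFinset
  have hPirr : ∀ p ∈ P, Irreducible p := by
    intro p hp
    simp only [P, Finset.mem_biUnion, Finset.mem_univ, true_and, Multiset.mem_toFinset] at hp
    obtain ⟨i, j, hp⟩ := hp
    exact UniqueFactorizationMonoid.irreducible_of_factor p hp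
  -- membership in terms of iterated polynomials
  have hmem : ∀ x y : ℝ, (x ∈ Icc a b ∧ y = f x) ↔ ∃ i,
      (∀ j, (toXY (g i j)).evalEval x y = 0) ∧ ∀ j, 0 < (toXY (h i j)).evalEval x y := by
    intro x y
    have h1 := Set.ext_iff.1 hG ![x, y]
    simp only [mem_ofPred_eq, mem_iUnion, hB, ← toXY_eval] at h1
    simpa using h1
  have e1 : ∀ᶠ x in cofinite, ∀ p ∈ P, ∀ y, p.evalEval x y = 0 →
      (Polynomial.derivative p).evalEval x y ≠ 0 :=
    (Filter.eventually_all_finset P).2 fun p hp => simple_root p (hPirr p hp)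
  have e2 : ∀ᶠ x in cofinite, ∀ p ∈ P, ∀ y, p.evalEval x y = 0 →
      p ∣ dX p ∨ (dX p).evalEval x y ≠ 0 :=
    (Filter.eventually_all_finset P).2 fun p hp => dichotomy p (hPirr p hp) (dX p)
  have e3 : ∀ᶠ x in cofinite, ∀ p ∈ P, ∀ i, ∀ j, ∀ y, p.evalEval x y = 0 →
      p ∣ toXY (g i j) ∨ (toXY (g i j)).evalEval x y ≠ 0 :=
    (Filter.eventually_all_finset P).2 fun p hp => Filter.eventually_all.2 fun i =>
      Filter.eventually_all.2 fun j => dichotomy p (hPirr p hp) _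
  filter_upwards [e1, e2, e3] with x₀ h1 h2 h3 hx₀
  obtain ⟨i, hi0, hi1⟩ := (hmem x₀ (f x₀)).1 ⟨Ioo_subset_Icc_self hx₀, rfl⟩
  -- some equation is nontrivial
  have hne : ∃ j, toXY (g i j) ≠ 0 := by
    by_contra! hcon
    have hev : ∀ᶠ y in 𝓝 (f x₀), ∀ j, 0 < (toXY (h i j)).evalEval x₀ y := by
      refine Filter.eventually_all.2 fun j => ?_
      have hc : Continuous fun y : ℝ => (toXY (h i j)).evalEval x₀ y :=
        (contDiff_evalEval (toXY (h i j))).continuous.comp (by fun_prop : Continuous fun y : ℝ => (x₀, y))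
      exact hc.continuousAt.eventually (lt_mem_nhds (hi1 j))
    have hev' : ∀ᶠ y in 𝓝[≠] (f x₀), ∀ j, 0 < (toXY (h i j)).evalEval x₀ y :=
      hev.filter_mono nhdsWithin_le_nhds
    obtain ⟨y, hy, hy'⟩ := (hev'.and self_mem_nhdsWithin).exists
    exact hy' ((hmem x₀ y).2 ⟨i, fun j => by rw [hcon j]; simp, hy⟩).2
  obtain ⟨j, hj⟩ := hne
  obtain ⟨p, hpm, hp0⟩ := exists_factor _ hj _ _ (hi0 j)
  have hpP : p ∈ P := Finset.mem_biUnion.2 ⟨i, Finset.mem_univ _,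
    Finset.mem_biUnion.2 ⟨j, Finset.mem_univ _, hpm⟩⟩
  have hpy := h1 p hpP _ hp0
  obtain ⟨φ, hφ0, hφ1, hφ2⟩ := implicit p x₀ (f x₀) hp0 hpy
  have hcont : ∀ q : RXY, ContinuousAt (fun x => q.evalEval x (φ x)) x₀ := fun q =>
    ContinuousAt.comp (g := fun z : ℝ × ℝ => q.evalEval z.1 z.2) (f := fun x => (x, φ x))
      (contDiff_evalEval q).continuous.continuousAt
      (continuousAt_id.prodMk hφ1.continuousAt)
  have hpos : ∀ᶠ x in 𝓝 x₀, ∀ j, 0 < (toXY (h i j)).evalEval x (φ x) := by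
    refine Filter.eventually_all.2 fun j => ?_
    refine (hcont (toXY (h i j))).eventually (lt_mem_nhds ?_)
    simpa only [hφ0] using hi1 j
  have hfφ : ∀ᶠ x in 𝓝 x₀, f x = φ x := by
    filter_upwards [hφ2, hpos] with x hx hx'
    refine ((hmem x (φ x)).2 ⟨i, fun j => ?_, hx'⟩).2.symm
    exact evalEval_dvd ((h3 p hpP i j _ hp0).resolve_right (not_not.2 (hi0 j))) hx
  have hfφ' : f =ᶠ[𝓝 x₀] φ := hfφ
  have hf1 : ContDiffAt ℝ 1 f x₀ := hφ1.congr_of_eventuallyEq hfφ'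
  refine ⟨hf1, ?_⟩
  have hpf : ∀ᶠ x in 𝓝 x₀, p.evalEval x (f x) = 0 := by
    filter_upwards [hφ2, hfφ] with x hx hx'
    rwa [hx']
  have hdiff : ∀ᶠ x in 𝓝 x₀, DifferentiableAt ℝ f x := by
    filter_upwards [hf1.eventually (by simp)] with x hx
    exact hx.differentiableAt one_ne_zero
  have hder : ∀ᶠ x in 𝓝 x₀, (dX p).evalEval x (f x) +
      (Polynomial.derivative p).evalEval x (f x) * deriv f x = 0 := by
    filter_upwards [hpf.eventually_nhds, hdiff] with x hx hxd
    have hc : HasDerivAt (fun t => p.evalEval t (f t)) _ x :=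
      HasFDerivAt.comp_hasDerivAt (l := fun z : ℝ × ℝ => p.evalEval z.1 z.2)
        (f := fun t => (t, f t)) x (hdX p x (f x)) ((hasDerivAt_id x).prodMk hxd.hasDerivAt)
    have hz : HasDerivAt (fun t => p.evalEval t (f t)) 0 x :=
      (hasDerivAt_const x (0 : ℝ)).congr_of_eventuallyEq hx
    have := hc.unique hz
    simpa using this
  rcases h2 p hpP _ hp0 with hdv | hnz
  · right
    have hpyne : ∀ᶠ x in 𝓝 x₀, (Polynomial.derivative p).evalEval x (φ x) ≠ 0 := by
      refine (hcont (Polynomial.derivative p)).eventually_ne ?_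
      simpa only [hφ0] using hpy
    filter_upwards [hpyne, hfφ, hder, hpf] with x ha hb hc hd
    rw [evalEval_dvd hdv hd, zero_add] at hc
    rw [← hb] at ha
    exact (mul_eq_zero.1 hc).resolve_left ha
  · left
    intro h0
    have := hder.self_of_nhds
    rw [h0] at this
    exact hnz (by simpa using this)

lemma interval_case (u v : ℝ) (f : ℝ → ℝ)
    (h : ∀ x ∈ Ioo u v, ContDiffAt ℝ 1 f x ∧
      (deriv f x ≠ 0 ∨ ∀ᶠ y in 𝓝 x, deriv f y = 0)) :
    ContDiffOn ℝ 1 f (Ioo u v) ∧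
        ((∀ x ∈ Ioo u v, ∀ y ∈ Ioo u v, f x = f y) ∨
          StrictMonoOn f (Ioo u v) ∨ StrictAntiOn f (Ioo u v)) := by
  have hcd : ContDiffOn ℝ 1 f (Ioo u v) := fun x hx => (h x hx).1.contDiffWithinAt
  refine ⟨hcd, ?_⟩
  have hd : ContinuousOn (deriv f) (Ioo u v) :=
    hcd.continuousOn_deriv_of_isOpen isOpen_Ioo le_rfl
  have hconn : IsPreconnected (Ioo u v) := isPreconnected_Ioo
  have hdf : DifferentiableOn ℝ f (Ioo u v) := hcd.differentiableOn one_ne_zero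
  by_cases hz : ∃ x ∈ Ioo u v, deriv f x = 0
  · left
    obtain ⟨x₁, hx₁, hx₁'⟩ := hz
    have hall : ∀ x ∈ Ioo u v, deriv f x = 0 := by
      by_contra! hcon
      obtain ⟨x₂, hx₂, hx₂'⟩ := hcon
      have hU : IsOpen {x | x ∈ Ioo u v ∧ deriv f x ≠ 0} := 
        hd.isOpen_inter_preimage isOpen_Ioo isOpen_ne
      have hV : IsOpen {x | ∀ᶠ y in 𝓝 x, deriv f y = 0} := isOpen_setOfPred_eventually_nhds
      obtain ⟨w, hw, hw1, hw2⟩ := hconn _ _ hU hV (fun x hx => (h x hx).2.imp (fun hh => ⟨hx, hh⟩) id)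
        ⟨x₂, hx₂, hx₂, hx₂'⟩ ⟨x₁, hx₁, (h x₁ hx₁).2.resolve_left (not_not.2 hx₁')⟩
      exact hw1.2 (Filter.Eventually.self_of_nhds (p := fun y => deriv f y = 0) hw2)
    intro x hx y hy
    exact isOpen_Ioo.is_const_of_deriv_eq_zero hconn hdf hall hx hy
  · right
    push Not at hz
    have hconv : Convex ℝ (Ioo u v) := convex_Ioo u v
    have hint : interior (Ioo u v) = Ioo u v := interior_Ioo
    by_cases hp : ∀ x ∈ Ioo u v, 0 < deriv f x
    · left
      exact strictMonoOn_of_deriv_pos hconv hcd.continuousOn (by rwa [hint])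
    · right
      push Not at hp
      obtain ⟨x₁, hx₁, hx₁'⟩ := hp
      refine strictAntiOn_of_deriv_neg hconv hcd.continuousOn ?_
      rw [hint]
      intro x hx
      by_contra! hcon
      obtain ⟨w, hw, hw'⟩ := hconn.intermediate_value hx₁ hx hd ⟨hx₁', hcon⟩
      exact hz w hw hw'

end MonoLemma

/-- **Lemma 2.4 (Monotonicity Lemma).** -/
theorem monotonicity_lemma (a b : ℝ) (hab : a < b) (f : ℝ → ℝ)
    (hsa : IsSAFunOn (Icc a b) f) :
    ∃ (N : ℕ) (t : Fin (N + 1) → ℝ),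
      StrictMono t ∧ t 0 = a ∧ t (Fin.last N) = b ∧
      ∀ l : Fin N,
        ContDiffOn ℝ 1 f (Ioo (t l.castSucc) (t l.succ)) ∧
        ((∀ x ∈ Ioo (t l.castSucc) (t l.succ), ∀ y ∈ Ioo (t l.castSucc) (t l.succ),
            f x = f y) ∨
          StrictMonoOn f (Ioo (t l.castSucc) (t l.succ)) ∨
          StrictAntiOn f (Ioo (t l.castSucc) (t l.succ))) := by
  have hfin := Filter.eventually_cofinite.1 (MonoLemma.local_structure a b f hsa)
  set S := hfin.toFinset with hS
  have hSab : ∀ x ∈ S, x ∈ Ioo a b := by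
    intro x hx
    rw [hS, Set.Finite.mem_toFinset] at hx
    by_contra hcon
    exact hx fun hh => absurd hh hcon
  set T : Finset ℝ := insert a (insert b S) with hT
  have haT : a ∈ T := by simp [hT]
  have hbT : b ∈ T := by simp [hT]
  have hTab : ∀ x ∈ T, a ≤ x ∧ x ≤ b := by
    intro x hx
    simp only [hT, Finset.mem_insert] at hx
    rcases hx with rfl | rfl | hx
    · exact ⟨le_rfl, hab.le⟩
    · exact ⟨hab.le, le_rfl⟩
    · exact ⟨(hSab x hx).1.le, (hSab x hx).2.le⟩
  obtain ⟨N, hN⟩ : ∃ N, T.card = N + 1 :=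
    Nat.exists_eq_succ_of_ne_zero (Finset.card_ne_zero_of_mem haT)
  let t := T.orderEmbOfFin hN
  have hmono : StrictMono t := t.strictMono
  have hsurj : ∀ x ∈ T, ∃ i, t i = x := by
    intro x hx
    have : x ∈ Set.range t := by rw [Finset.range_orderEmbOfFin]; exact hx
    exact this
  have htT : ∀ i, t i ∈ T := fun i => Finset.orderEmbOfFin_mem T hN i
  have ht0 : t 0 = a := by
    obtain ⟨i, hi⟩ := hsurj a haT
    exact le_antisymm (hi ▸ hmono.monotone (Fin.zero_le i)) (hTab _ (htT 0)).1
  have htN : t (Fin.last N) = b := by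
    obtain ⟨i, hi⟩ := hsurj b hbT
    exact le_antisymm (hTab _ (htT _)).2 (hi ▸ hmono.monotone (Fin.le_last i))
  refine ⟨N, t, hmono, ht0, htN, fun m => ?_⟩
  apply MonoLemma.interval_case
  intro x hx
  have hxab : x ∈ Ioo a b :=
    ⟨(hTab _ (htT _)).1.trans_lt hx.1, hx.2.trans_le (hTab _ (htT _)).2⟩
  have hxS : x ∉ S := by
    intro hxS
    obtain ⟨i, rfl⟩ := hsurj x (by simp [hT, hxS])
    have h1 := hmono.lt_iff_lt.1 hx.1
    have h2 := hmono.lt_iff_lt.1 hx.2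
    rw [Fin.lt_def] at h1 h2
    simp at h1 h2
    omega
  rw [hS, Set.Finite.mem_toFinset] at hxS
  simp only [mem_ofPred_eq, not_not] at hxS
  exact hxS hxab
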